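/- Any Hurwitz-Radon family of real orthogonal N×N matrices has at most ρ(N) - 1 members, where for N = 2^{4d+c}·(odd) with 0 ≤ c < 4 one defines ρ(N) = 2^c + 8d. -/

import Mathlib

open Matrix

/-- The Hurwitz–Radon function: `ρ(N) = 2^c + 8d` where `2^(4d+c)` (with `0 ≤ c < 4`)
is the largest power of 2 dividing `N`. -/
def hrRho (N : ℕ) : ℕ := 2 ^ (padicValNat 2 N % 4) + 8 * (padicValNat 2 N / 4)

namespace HR

section ring
variable {R : Type*} [Ring R]

/-- Anticommutation. -/
def AC (a b : R) : Prop := a * b = -(b * a)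

theorem AC.symm {a b : R} (h : AC a b) : AC b a := by
  unfold AC at *; rw [h, neg_neg]

theorem AC.aa {x a b : R} (h : AC x a) (k : AC x b) : Commute x (a * b) := by
  unfold AC at *
  show x * (a * b) = a * b * x
  rw [← mul_assoc, h, neg_mul, mul_assoc, k, mul_neg, neg_neg, mul_assoc]

theorem AC.ac {x a b : R} (h : AC x a) (k : Commute x b) : AC x (a * b) := by
  unfold AC at *
  rw [← mul_assoc, h, neg_mul, mul_assoc, k.eq, mul_assoc]

theorem AC.ca {x a b : R} (h : Commute x a) (k : AC x b) : AC x (a * b) := by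
  unfold AC at *
  rw [← mul_assoc, h.eq, mul_assoc, k, mul_neg, mul_assoc]

theorem AC.sq {a b : R} (h : AC a b) : (a * b) * (a * b) = -((a * a) * (b * b)) := by
  have : b * a = -(a * b) := h.symm
  calc (a * b) * (a * b) = a * (b * a) * b := by noncomm_ring
    _ = _ := by rw [this]; noncomm_ring

theorem Csq {a b : R} (h : Commute a b) : (a * b) * (a * b) = (a * a) * (b * b) :=
  h.symm.mul_mul_mul_comm a b

end ring

variable {V : Type} [AddCommGroup V] [Module ℝ V]

/-- Halving an invariant subspace. -/
theorem halve [FiniteDimensional ℝ V] (W : Submodule ℝ V) (P Q : Module.End ℝ V)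
    (hP : P * P = 1) (hQ : Q * Q = -1 ) (hPQ : AC P Q)
    (hWP : ∀ x ∈ W, P x ∈ W) (hWQ : ∀ x ∈ W, Q x ∈ W) :
    Module.finrank ℝ W = 2 * Module.finrank ℝ (W ⊓ LinearMap.ker (P - 1) : Submodule ℝ V) := by
  have hP' : ∀ x, P (P x) = x := fun x => by
    have := LinearMap.congr_fun hP x; simpa using this
  have hQ' : ∀ x, Q (Q x) = -x := fun x => by
    have := LinearMap.congr_fun hQ x; simpa using this
  have hPQ' : ∀ x, P (Q x) = -Q (P x) := fun x => by
    have := LinearMap.congr_fun hPQ x; simpa using this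
  set E : Submodule ℝ V := W ⊓ LinearMap.ker (P - 1) with hE
  set F : Submodule ℝ V := W ⊓ LinearMap.ker (P + 1) with hF
  have mE : ∀ x, x ∈ E ↔ x ∈ W ∧ P x = x := fun x => by
    simp [hE, sub_eq_zero]
  have mF : ∀ x, x ∈ F ↔ x ∈ W ∧ P x = -x := fun x => by
    simp [hF, add_eq_zero_iff_eq_neg]
  have hsup : E ⊔ F = W := by
    apply le_antisymm
    · exact sup_le inf_le_left inf_le_left
    · intro x hx
      have : x = (1/2 : ℝ) • (x + P x) + (1/2 : ℝ) • (x - P x) := by module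
      rw [this]
      refine Submodule.add_mem_sup ?_ ?_
      · refine (mE _).2 ⟨W.smul_mem _ (W.add_mem hx (hWP x hx)), ?_⟩
        simp [hP', add_comm]
      · refine (mF _).2 ⟨W.smul_mem _ (W.sub_mem hx (hWP x hx)), ?_⟩
        simp [hP', ← smul_neg]
  have hinf : E ⊓ F = ⊥ := by
    rw [eq_bot_iff]
    rintro x ⟨h1, h2⟩
    have h3 := ((mE x).1 h1).2
    have h4 := ((mF x).1 h2).2
    rw [h3] at h4
    have h5 : x = (1/2 : ℝ) • (x - -x) := by module
    rw [← h4, sub_self, smul_zero] at h5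
    exact h5
  have hQinj : Function.Injective Q := fun x y h => by
    have := congrArg Q h
    rw [hQ', hQ'] at this
    exact neg_injective this
  have l1 : E.map Q ≤ F := by
    rintro _ ⟨x, hx, rfl⟩
    have := (mE x).1 hx
    exact (mF _).2 ⟨hWQ _ this.1, by rw [hPQ', this.2]⟩
  have l2 : F.map Q ≤ E := by
    rintro _ ⟨x, hx, rfl⟩
    have := (mF x).1 hx
    exact (mE _).2 ⟨hWQ _ this.1, by rw [hPQ', this.2]; simp⟩
  have f1 := Submodule.finrank_mono l1
  have f2 := Submodule.finrank_mono l2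
  rw [← (Submodule.equivMapOfInjective Q hQinj _).finrank_eq] at f1 f2
  have := Submodule.finrank_sup_add_finrank_inf_eq E F
  rw [hsup, hinf, finrank_bot] at this
  omega

theorem mem_halve (W : Submodule ℝ V) (P T : Module.End ℝ V) (h : Commute T P)
    (hT : ∀ x ∈ W, T x ∈ W) :
    ∀ x ∈ (W ⊓ LinearMap.ker (P - 1) : Submodule ℝ V), 
      T x ∈ (W ⊓ LinearMap.ker (P - 1) : Submodule ℝ V) := by
  rintro x ⟨h1, h2⟩
  refine ⟨hT x h1, ?_⟩
  have h2' : P x = x := by simpa [sub_eq_zero] using h2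
  have : T (P x) = P (T x) := LinearMap.congr_fun h.eq x
  rw [h2'] at this
  simp [sub_eq_zero, ← this]

theorem two_dvd [FiniteDimensional ℝ V] (a : Module.End ℝ V) (ha : a * a = -1) :
    2 ∣ Module.finrank ℝ V := by
  let f : ℂ →ₐ[ℝ] Module.End ℝ V := Complex.lift ⟨a, ha⟩
  letI : Module ℂ V := Module.compHom V f.toRingHom
  haveI : IsScalarTower ℝ ℂ V := ⟨fun r c x => by
    show f (r • c) x = r • f c x
    simp⟩
  have := Module.finrank_mul_finrank ℝ ℂ V
  rw [Complex.finrank_real_complex] at this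
  exact ⟨_, this.symm⟩

theorem four_dvd [FiniteDimensional ℝ V] (a b : Module.End ℝ V) (ha : a * a = -1)
    (hb : b * b = -1) (hab : AC a b) :
    4 ∣ Module.finrank ℝ V := by
  let B : QuaternionAlgebra.Basis (Module.End ℝ V) (-1 : ℝ) 0 (-1) :=
    { i := a, j := b, k := a * b
      i_mul_i := by simp [ha]
      j_mul_j := by simp [hb]
      i_mul_j := rfl
      j_mul_i := by
        have : b * a = -(a * b) := hab.symm
        simpa using this }
  let f : Quaternion ℝ →ₐ[ℝ] Module.End ℝ V := QuaternionAlgebra.lift B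
  letI : Module (Quaternion ℝ) V := Module.compHom V f.toRingHom
  haveI : IsScalarTower ℝ (Quaternion ℝ) V := ⟨fun r c x => by
    show f (r • c) x = r • f c x
    simp⟩
  have := Module.finrank_mul_finrank ℝ (Quaternion ℝ) V
  rw [Quaternion.finrank_eq_four] at this
  exact ⟨_, this.symm⟩

theorem eight_dvd [FiniteDimensional ℝ V] (a b c d : Module.End ℝ V) (ha : a * a = -1)
    (hb : b * b = -1) (hc : c * c = -1) (hd : d * d = -1) (hab : AC a b) (hac : AC a c)
    (had : AC a d) (hbc : AC b c) (hbd : AC b d) (hcd : AC c d) :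
    8 ∣ Module.finrank ℝ V := by
  have cc : Commute c (a * b) := hac.symm.aa hbc.symm
  have h := halve ⊤ (a * b * c) d
    (by rw [Csq cc.symm, hab.sq, ha, hb, hc]; simp) hd
    (AC.symm (AC.ca (had.symm.aa hbd.symm) hcd.symm)) (by simp) (by simp)
  set W : Submodule ℝ V := ⊤ ⊓ LinearMap.ker (a * b * c - 1)
  have ca : Commute a (a * b * c) := by
    rw [mul_assoc]; exact (Commute.refl a).mul_right (hab.aa hac)
  have cb : Commute b (a * b * c) :=
    AC.aa (hab.symm.ac (Commute.refl b)) hbc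
  have Wa : ∀ x ∈ W, a x ∈ W := mem_halve _ _ _ ca (by simp)
  have Wb : ∀ x ∈ W, b x ∈ W := mem_halve _ _ _ cb (by simp)
  have h4 := four_dvd (V := W) (a.restrict Wa) (b.restrict Wb)
    (by ext x; simpa using LinearMap.congr_fun ha x)
    (by ext x; simpa using LinearMap.congr_fun hb x)
    (by ext x; simpa using LinearMap.congr_fun hab x)
  rw [finrank_top] at h
  omega

/-- Exponent of the dimension divisor. -/
def dl (s : ℕ) : ℕ := 4 * (s / 8) +
  (if s % 8 = 0 then 0 else if s % 8 = 1 then 1 else if s % 8 ≤ 3 then 2 else 3)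

theorem periodic [FiniteDimensional ℝ V] (s : ℕ) (e : ℕ → Module.End ℝ V)
    (hsq : ∀ i < s + 8, e i * e i = -1) 
    (hac : ∀ i < s + 8, ∀ j < s + 8, i ≠ j → AC (e i) (e j)) :
    ∃ (W : Submodule ℝ V) (g : ℕ → Module.End ℝ W), 
      Module.finrank ℝ V = 16 * Module.finrank ℝ W ∧
      (∀ i < s, g i * g i = -1) ∧ (∀ i < s, ∀ j < s, i ≠ j → AC (g i) (g j)) := by
  have A : ∀ i j, i < s + 8 → j < s + 8 → i ≠ j → AC (e i) (e j) := fun i j a b c => hac i a j b c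
  -- pairs
  have pc : ∀ k i j, k < s + 8 → i < s + 8 → j < s + 8 → k ≠ i → k ≠ j →
      Commute (e k) (e i * e j) := fun k i j hk hi hj h1 h2 =>
    (A k i hk hi h1).aa (A k j hk hj h2)
  have pl : ∀ i j, i < s + 8 → j < s + 8 → i ≠ j → AC (e i) (e i * e j) := fun i j hi hj h =>
    AC.ca (Commute.refl _) (A i j hi hj h)
  have pr : ∀ i j, i < s + 8 → j < s + 8 → i ≠ j → AC (e j) (e i * e j) := fun i j hi hj h =>
    (A j i hj hi h.symm).ac (Commute.refl _)
  have psq : ∀ i j, i < s + 8 → j < s + 8 → i ≠ j → (e i * e j) * (e i * e j) = -1 :=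
    fun i j hi hj h => by rw [(A i j hi hj h).sq, hsq i hi, hsq j hj]; simp
  -- quadruples
  have qc : ∀ m i j k l, m < s + 8 → i < s + 8 → j < s + 8 → k < s + 8 → l < s + 8 →
      m ≠ i → m ≠ j → m ≠ k → m ≠ l → Commute (e m) ((e i * e j) * (e k * e l)) :=
    fun m i j k l hm hi hj hk hl h1 h2 h3 h4 =>
      (pc m i j hm hi hj h1 h2).mul_right (pc m k l hm hk hl h3 h4)
  have qsq : ∀ i j k l, i < s + 8 → j < s + 8 → k < s + 8 → l < s + 8 →
      i ≠ j → i ≠ k → i ≠ l → j ≠ k → j ≠ l → k ≠ l →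
      ((e i * e j) * (e k * e l)) * ((e i * e j) * (e k * e l)) = 1 := by
    intro i j k l hi hj hk hl h1 h2 h3 h4 h5 h6
    rw [Csq ((pc i k l hi hk hl h2 h3).mul_left (pc j k l hj hk hl h4 h5)),
      psq i j hi hj h1, psq k l hk hl h6]; simp
  have q1 : ∀ i j k l, i < s + 8 → j < s + 8 → k < s + 8 → l < s + 8 →
      i ≠ j → i ≠ k → i ≠ l → AC (e i) ((e i * e j) * (e k * e l)) :=
    fun i j k l hi hj hk hl h1 h2 h3 => (pl i j hi hj h1).ac (pc i k l hi hk hl h2 h3)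
  have q2 : ∀ i j k l, i < s + 8 → j < s + 8 → k < s + 8 → l < s + 8 →
      j ≠ i → j ≠ k → j ≠ l → AC (e j) ((e i * e j) * (e k * e l)) :=
    fun i j k l hi hj hk hl h1 h2 h3 => (pr i j hi hj h1.symm).ac (pc j k l hj hk hl h2 h3)
  have q3 : ∀ i j k l, i < s + 8 → j < s + 8 → k < s + 8 → l < s + 8 →
      k ≠ i → k ≠ j → k ≠ l → AC (e k) ((e i * e j) * (e k * e l)) :=
    fun i j k l hi hj hk hl h1 h2 h3 => AC.ca (pc k i j hk hi hj h1 h2) (pl k l hk hl h3)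
  have q4 : ∀ i j k l, i < s + 8 → j < s + 8 → k < s + 8 → l < s + 8 →
      l ≠ i → l ≠ j → l ≠ k → AC (e l) ((e i * e j) * (e k * e l)) :=
    fun i j k l hi hj hk hl h1 h2 h3 => AC.ca (pc l i j hl hi hj h1 h2) (pr k l hk hl h3.symm)
  set P1 := (e 0 * e 1) * (e 2 * e 3) with hP1
  set P2 := (e 0 * e 1) * (e 4 * e 5) with hP2
  set P3 := (e 0 * e 2) * (e 4 * e 6) with hP3
  set R := (e 4 * e 5) * (e 6 * e 7) with hR
  -- relations with P1
  have a01 : AC (e 0) P1 := by apply q1 <;> omega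
  have a11 : AC (e 1) P1 := by apply q2 <;> omega
  have a21 : AC (e 2) P1 := by apply q3 <;> omega
  have a31 : AC (e 3) P1 := by apply q4 <;> omega
  have c1 : ∀ m, 4 ≤ m → m < s + 8 → Commute (e m) P1 := fun m h h' => by
    apply qc <;> omega
  have a02 : AC (e 0) P2 := by apply q1 <;> omega
  have a12 : AC (e 1) P2 := by apply q2 <;> omega
  have a42 : AC (e 4) P2 := by apply q3 <;> omega
  have a52 : AC (e 5) P2 := by apply q4 <;> omega
  have c22 : Commute (e 2) P2 := by apply qc <;> omega
  have c32 : Commute (e 3) P2 := by apply qc <;> omega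
  have c2 : ∀ m, 6 ≤ m → m < s + 8 → Commute (e m) P2 := fun m h h' => by
    apply qc <;> omega
  have a03 : AC (e 0) P3 := by apply q1 <;> omega
  have a23 : AC (e 2) P3 := by apply q2 <;> omega
  have a43 : AC (e 4) P3 := by apply q3 <;> omega
  have a63 : AC (e 6) P3 := by apply q4 <;> omega
  have c13 : Commute (e 1) P3 := by apply qc <;> omega
  have c33 : Commute (e 3) P3 := by apply qc <;> omega
  have c53 : Commute (e 5) P3 := by apply qc <;> omega
  have c3 : ∀ m, 7 ≤ m → m < s + 8 → Commute (e m) P3 := fun m h h' => by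
    apply qc <;> omega
  have aR4 : AC (e 4) R := by apply q1 <;> omega
  have aR5 : AC (e 5) R := by apply q2 <;> omega
  have aR6 : AC (e 6) R := by apply q3 <;> omega
  have aR7 : AC (e 7) R := by apply q4 <;> omega
  have cRl : ∀ m, m < 4 → Commute (e m) R := fun m h => by
    apply qc <;> omega
  have cR : ∀ m, 8 ≤ m → m < s + 8 → Commute (e m) R := fun m h h' => by
    apply qc <;> omega
  set O := P1 * R with hO
  have sP1 : P1 * P1 = 1 := by apply qsq <;> omega
  have sP2 : P2 * P2 = 1 := by apply qsq <;> omega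
  have sP3 : P3 * P3 = 1 := by apply qsq <;> omega
  have sR : R * R = 1 := by apply qsq <;> omega
  have cP1R : Commute P1 R :=
    ((cRl 0 (by omega)).mul_left (cRl 1 (by omega))).mul_left
      ((cRl 2 (by omega)).mul_left (cRl 3 (by omega)))
  have sO : O * O = 1 := by rw [hO, Csq cP1R, sP1, sR, one_mul]
  have aO : ∀ m, m < 8 → AC (e m) O := by
    intro m hm
    interval_cases m
    · exact a01.ac (cRl 0 (by omega))
    · exact a11.ac (cRl 1 (by omega))
    · exact a21.ac (cRl 2 (by omega))
    · exact a31.ac (cRl 3 (by omega))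
    · exact AC.ca (c1 4 (by omega) (by omega)) aR4
    · exact AC.ca (c1 5 (by omega) (by omega)) aR5
    · exact AC.ca (c1 6 (by omega) (by omega)) aR6
    · exact AC.ca (c1 7 (by omega) (by omega)) aR7
  have cO : ∀ m, 8 ≤ m → m < s + 8 → Commute (e m) O := fun m h h' =>
    (c1 m (by omega) h').mul_right (cR m h h')
  have cOP1 : Commute O P1 := 
    (((aO 0 (by omega)).symm.aa (aO 1 (by omega)).symm).mul_right
      ((aO 2 (by omega)).symm.aa (aO 3 (by omega)).symm))
  have cOP2 : Commute O P2 := 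
    (((aO 0 (by omega)).symm.aa (aO 1 (by omega)).symm).mul_right
      ((aO 4 (by omega)).symm.aa (aO 5 (by omega)).symm))
  have cOP3 : Commute O P3 := 
    (((aO 0 (by omega)).symm.aa (aO 2 (by omega)).symm).mul_right
      ((aO 4 (by omega)).symm.aa (aO 6 (by omega)).symm))
  have c21 : Commute P2 P1 := Commute.symm <|
    (a02.symm.aa a12.symm).symm.mul_left (c22.mul_left c32)
  have c31 : Commute P3 P1 :=
    (a01.symm.aa a21.symm).symm.mul_left ((c1 4 (by omega) (by omega)).mul_left (c1 6 (by omega) (by omega)))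
  have c32' : Commute P3 P2 := Commute.symm <|
    AC.aa (AC.ac a02.symm c22.symm) (AC.ac a42.symm (c2 6 (by omega) (by omega)).symm)
  -- the chain of subspaces
  have h1 := halve ⊤ P1 (e 0) sP1 (hsq 0 (by omega)) a01.symm (by simp) (by simp)
  have m1 := fun T h => mem_halve (⊤ : Submodule ℝ V) P1 T h (by simp)
  set W1 : Submodule ℝ V := ⊤ ⊓ LinearMap.ker (P1 - 1)
  have h2 := halve W1 P2 (e 4) sP2 (hsq 4 (by omega)) a42.symm (m1 _ c21)
    (m1 _ (c1 4 (by omega) (by omega)))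
  have m2 := fun T h k => mem_halve W1 P2 T h (m1 T k)
  set W2 : Submodule ℝ V := W1 ⊓ LinearMap.ker (P2 - 1)
  have h3 := halve W2 P3 (e 6) sP3 (hsq 6 (by omega)) a63.symm (m2 _ c32' c31)
    (m2 _ (c2 6 (by omega) (by omega)) (c1 6 (by omega) (by omega)))
  have m3 := fun T h k l => mem_halve W2 P3 T h (m2 T k l)
  set W3 : Submodule ℝ V := W2 ⊓ LinearMap.ker (P3 - 1)
  have h4 := halve W3 O (e 7) sO (hsq 7 (by omega)) (aO 7 (by omega)).symm (m3 _ cOP3 cOP2 cOP1)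
    (m3 _ (c3 7 (by omega) (by omega)) (c2 7 (by omega) (by omega)) (c1 7 (by omega) (by omega)))
  have m4 := fun T h k l m => mem_halve W3 O T h (m3 T k l m)
  set W4 : Submodule ℝ V := W3 ⊓ LinearMap.ker (O - 1)
  have m5 : ∀ i, i < s → ∀ x ∈ W4, e (i + 8) x ∈ W4 := fun i hi =>
    m4 _ (cO _ (by omega) (by omega)) (c3 _ (by omega) (by omega)) (c2 _ (by omega) (by omega))
      (c1 _ (by omega) (by omega))
  classical
  refine ⟨W4, fun i => if h : i < s then (e (i + 8)).restrict (m5 i h) else 0, ?_, ?_, ?_⟩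
  · rw [finrank_top] at h1
    omega
  · intro i hi
    simp only [hi, dif_pos]
    ext x
    simpa using LinearMap.congr_fun (hsq (i + 8) (by omega)) x
  · intro i hi j hj hij
    simp only [hi, hj, dif_pos]
    unfold AC
    ext x
    simpa using LinearMap.congr_fun (A (i + 8) (j + 8) (by omega) (by omega) (by omega)) x

theorem main (s : ℕ) : ∀ (V : Type) [AddCommGroup V] [Module ℝ V] [FiniteDimensional ℝ V]
    (e : ℕ → Module.End ℝ V) (_ : ∀ i < s, e i * e i = -1)
    (_ : ∀ i < s, ∀ j < s, i ≠ j → AC (e i) (e j)), 2 ^ dl s ∣ Module.finrank ℝ V := by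
  induction s using Nat.strong_induction_on with
  | _ s ih =>
    intro V _ _ _ e hsq hac
    by_cases h8 : 8 ≤ s
    · obtain ⟨t, rfl⟩ := Nat.exists_eq_add_of_le' h8
      obtain ⟨W, g, hW, h1, h2⟩ := periodic t e hsq hac
      have hd := ih t (by omega) W g h1 h2
      have : dl (t + 8) = 4 + dl t := by
        unfold dl
        rw [Nat.add_mod_right, Nat.add_div_right _ (by omega)]
        omega
      rw [hW, this, pow_add]
      exact Nat.mul_dvd_mul (by norm_num) hd
    · by_cases h4 : 4 ≤ s
      · have hd : dl s = 3 := by unfold dl; split_ifs <;> omega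
        rw [hd]
        apply eight_dvd (e 0) (e 1) (e 2) (e 3)
        all_goals first | (apply hsq; omega) | (apply hac <;> omega)
      · by_cases h2 : 2 ≤ s
        · have hd : dl s = 2 := by unfold dl; split_ifs <;> omega
          rw [hd]
          apply four_dvd (e 0) (e 1)
          all_goals first | (apply hsq; omega) | (apply hac <;> omega)
        · by_cases h1 : 1 ≤ s
          · have hd : dl s = 1 := by unfold dl; split_ifs <;> omega
            rw [hd]
            exact two_dvd (e 0) (hsq 0 (by omega))
          · have hd : dl s = 0 := by unfold dl; split_ifs <;> omega
            rw [hd]; simp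

end HR

theorem stmt_16 {N s : ℕ} (hN : 0 < N) (A : Fin s → Matrix (Fin N) (Fin N) ℝ)
    (horth : ∀ j, A j * (A j)ᵀ = 1)
    (hskew : ∀ j, (A j)ᵀ = -(A j))
    (hanti : ∀ j k, j ≠ k → A j * A k = -(A k * A j)) :
    s ≤ hrRho N - 1 := by 
  classical
  have key := HR.main s (Fin N → ℝ)
    (fun i => if h : i < s then Matrix.toLin' (A ⟨i, h⟩) else 0)
    (by
      intro i hi
      have h := horth ⟨i, hi⟩
      rw [hskew, mul_neg, neg_eq_iff_eq_neg] at h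
      simp only [hi, dif_pos]
      rw [Module.End.mul_eq_comp, ← Matrix.toLin'_mul, h, map_neg, Matrix.toLin'_one]
      rfl)
    (by
      intro i hi j hj hij
      simp only [hi, hj, dif_pos]
      unfold HR.AC
      rw [Module.End.mul_eq_comp, Module.End.mul_eq_comp, ← Matrix.toLin'_mul,
        ← Matrix.toLin'_mul, ← map_neg, hanti _ _ (by simpa using hij)])
  rw [Module.finrank_fin_fun] at key
  haveI : Fact (Nat.Prime 2) := ⟨Nat.prime_two⟩
  have hv := (padicValNat_dvd_iff_le hN.ne').1 key
  unfold hrRho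
  generalize padicValNat 2 N = v at hv
  unfold HR.dl at hv
  have h4 : v % 4 = 0 ∨ v % 4 = 1 ∨ v % 4 = 2 ∨ v % 4 = 3 := by omega
  rcases h4 with h | h | h | h <;> rw [h] <;> split_ifs at hv <;> omega
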